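/- For all integers k ≥ 0 and p ≥ 1 with log_e^{(k)} p ≥ 1, there exists a (k,p)-tree T with Tran(T) ≤ (10 · log_e^{(k)} p)^p; equivalently, the minimum f_k(p) of Tran(T) over all (k,p)-trees T satisfies f_k(p)^{1/p} ≤ 10 · log_e^{(k)} p. -/

import Mathlib

/-- A rooted plane tree: every node carries the (ordered, finite) list of its children. -/
inductive PTree : Type where
  | node : List PTree → PTree

mutual
/-- The number of leaves of a rooted plane tree (a node with no children is a leaf). -/
def PTree.numLeaves : PTree → ℕ
  | .node [] => 1
  | .node (t :: ts) => PTree.numLeavesList (t :: ts)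

/-- The total number of leaves of the trees in a list. -/
def PTree.numLeavesList : List PTree → ℕ
  | [] => 0
  | t :: ts => t.numLeaves + PTree.numLeavesList ts
end

mutual
/-- `Tran(T) = ∏_{u a node of T} (number of children of u)!`. -/
def PTree.tran : PTree → ℕ
  | .node ts => ts.length.factorial * PTree.tranList ts

/-- The product of `Tran` over a list of trees. -/
def PTree.tranList : List PTree → ℕ
  | [] => 1
  | t :: ts => t.tran * PTree.tranList ts
end

/-- `UniformDepth d T` holds iff every root-to-leaf path of `T` has exactly `d` edges. -/
inductive PTree.UniformDepth : ℕ → PTree → Prop where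
  | leaf : PTree.UniformDepth 0 (.node [])
  | node (ts : List PTree) (d : ℕ) (hne : ts ≠ []) (h : ∀ t ∈ ts, PTree.UniformDepth d t) :
      PTree.UniformDepth (d + 1) (.node ts)

/-- The `k`-fold iterated natural logarithm, `log^{(0)} x = x`. -/
noncomputable def iterLog (k : ℕ) (x : ℝ) : ℝ := Real.log^[k] x

/-- `log* x`: the smallest `k ≥ 0` such that `log^{(k)} x ≤ 1`. -/
noncomputable def logStar (x : ℝ) : ℕ := sInf {k : ℕ | iterLog k x ≤ 1}

theorem fact_mul_le_pow (m : ℕ) : ∀ p, 1 ≤ p → p ≤ m → p.factorial * m ≤ m ^ p := by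
  intro p hp
  induction p, hp using Nat.le_induction with
  | base => intro _; simp
  | succ n hn ih =>
    intro h
    have := ih (by omega)
    calc (n+1).factorial * m = (n+1) * (n.factorial * m) := by rw [Nat.factorial_succ]; ring
      _ ≤ m * m ^ n := Nat.mul_le_mul h this
      _ = m ^ (n+1) := by ring

theorem node_numLeaves {ts : List PTree} (h : ts ≠ []) :
    (PTree.node ts).numLeaves = PTree.numLeavesList ts := by
  cases ts with
  | nil => exact absurd rfl h
  | cons t ts => simp [PTree.numLeaves]

theorem replicate_leaves (p : ℕ) :
    PTree.numLeavesList (List.replicate p (PTree.node [])) = p ∧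
    PTree.tranList (List.replicate p (PTree.node [])) = 1 := by
  induction p with
  | zero => simp [PTree.numLeavesList, PTree.tranList]
  | succ n ih =>
    rw [List.replicate_succ]
    simp only [PTree.numLeavesList, PTree.tranList, PTree.numLeaves, PTree.tran]
    rw [ih.1, ih.2]
    simp; omega

theorem star_tree (p : ℕ) (hp : 1 ≤ p) :
    ∃ T : PTree, T.UniformDepth 1 ∧ T.numLeaves = p ∧ T.tran = p.factorial := by
  have hne : List.replicate p (PTree.node []) ≠ [] := by
    intro h
    have := congrArg List.length h
    simp at this; omega
  refine ⟨.node (List.replicate p (.node [])), ?_, ?_, ?_⟩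
  · refine PTree.UniformDepth.node _ 0 hne ?_
    intro t ht
    rw [List.eq_of_mem_replicate ht]
    exact PTree.UniformDepth.leaf
  · rw [node_numLeaves hne, (replicate_leaves p).1]
  · simp [PTree.tran, (replicate_leaves p).2]

/-- Replace every leaf by a star with between 1 and `m` leaves. -/
theorem subst_tree (m : ℕ) (hm : 1 ≤ m) : ∀ (d : ℕ) (T : PTree), T.UniformDepth d →
    ∀ p, T.numLeaves ≤ p → p ≤ m * T.numLeaves →
    ∃ T' : PTree, T'.UniformDepth (d+1) ∧ T'.numLeaves = p ∧
      T'.tran * m ^ T.numLeaves ≤ T.tran * m ^ p := by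
  intro d
  induction d with
  | zero =>
    intro T hT p h1 h2
    cases hT
    simp only [PTree.numLeaves] at h1 h2
    obtain ⟨T', a, b, c⟩ := star_tree p h1
    refine ⟨T', a, b, ?_⟩
    rw [c]
    simpa [PTree.numLeaves, PTree.tran, PTree.tranList] using
      fact_mul_le_pow m p h1 (by omega)
  | succ d ih =>
    have key : ∀ ts : List PTree, (∀ t ∈ ts, PTree.UniformDepth d t) →
        ∀ p, PTree.numLeavesList ts ≤ p → p ≤ m * PTree.numLeavesList ts →
        ∃ ts' : List PTree, ts'.length = ts.length ∧
          (∀ t ∈ ts', PTree.UniformDepth (d+1) t) ∧ PTree.numLeavesList ts' = p ∧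
          PTree.tranList ts' * m ^ PTree.numLeavesList ts ≤ PTree.tranList ts * m ^ p := by
      intro ts
      induction ts with
      | nil =>
        intro _ p h1 h2
        have : p = 0 := by simpa [PTree.numLeavesList] using h2
        subst this
        exact ⟨[], rfl, by simp, by simp [PTree.numLeavesList], le_refl _⟩
      | cons t ts iht =>
        intro hts p h1 h2
        simp only [PTree.numLeavesList] at h1 h2
        rw [mul_add] at h2
        have ha : t.numLeaves ≤ m * t.numLeaves := Nat.le_mul_of_pos_left _ hm
        have hb : PTree.numLeavesList ts ≤ m * PTree.numLeavesList ts :=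
          Nat.le_mul_of_pos_left _ hm
        obtain ⟨p1, p2, hpp, h3, h4, h5, h6⟩ : ∃ p1 p2, p = p1 + p2 ∧ t.numLeaves ≤ p1 ∧
            p1 ≤ m * t.numLeaves ∧ PTree.numLeavesList ts ≤ p2 ∧
            p2 ≤ m * PTree.numLeavesList ts := by
          refine ⟨min (m * t.numLeaves) (p - PTree.numLeavesList ts),
            p - min (m * t.numLeaves) (p - PTree.numLeavesList ts), ?_⟩
          omega
        obtain ⟨t', a1, a2, a3⟩ := ih t (hts t (by simp)) p1 h3 h4
        obtain ⟨ts', b1, b2, b3, b4⟩ := iht (fun u hu => hts u (by simp [hu])) p2 h5 h6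
        refine ⟨t' :: ts', by simp [b1], ?_, by simp [PTree.numLeavesList, a2, b3, hpp], ?_⟩
        · intro u hu
          rcases List.mem_cons.1 hu with rfl | hu
          · exact a1
          · exact b2 u hu
        · simp only [PTree.numLeavesList, PTree.tranList]
          rw [hpp, pow_add, pow_add]
          calc _ = (t'.tran * m ^ t.numLeaves) *
                (PTree.tranList ts' * m ^ PTree.numLeavesList ts) := by ring
            _ ≤ _ := Nat.mul_le_mul a3 b4
            _ = _ := by ring
    intro T hT p h1 h2
    cases hT with
    | node ts _ hne h =>
      rw [node_numLeaves hne] at h1 h2 ⊢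
      obtain ⟨ts', a1, a2, a3, a4⟩ := key ts h p h1 h2
      have hne' : ts' ≠ [] := by
        intro h0
        rw [h0] at a1
        exact hne (List.length_eq_zero_iff.1 a1.symm)
      refine ⟨.node ts', PTree.UniformDepth.node _ _ hne' a2, ?_, ?_⟩
      · rw [node_numLeaves hne', a3]
      · simp only [PTree.tran]
        rw [a1, mul_assoc, mul_assoc]
        exact Nat.mul_le_mul_left _ a4

theorem direct_tree (p : ℕ) (hp : 1 ≤ p) (k : ℕ) :
    ∃ T : PTree, T.UniformDepth (k+1) ∧ T.numLeaves = p ∧ T.tran ≤ p.factorial := by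
  induction k with
  | zero =>
    obtain ⟨T, a, b, c⟩ := star_tree p hp
    exact ⟨T, a, b, c.le⟩
  | succ k ih =>
    obtain ⟨T, a, b, c⟩ := ih
    obtain ⟨T', a', b', c'⟩ := subst_tree 1 le_rfl _ T a p (by omega) (by omega)
    refine ⟨T', a', b', ?_⟩
    simp at c'
    omega

/-- Iterated logarithm truncated below at 1. -/
noncomputable def truncLog : ℕ → ℝ → ℝ
  | 0, x => x
  | k+1, x => max 1 (Real.log (truncLog k x))

theorem truncLog_one_le (k : ℕ) (x : ℝ) (hx : 1 ≤ x) : 1 ≤ truncLog k x := by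
  cases k with
  | zero => exact hx
  | succ k => exact le_max_left _ _

theorem truncLog_mono (k : ℕ) (x y : ℝ) (hx : 1 ≤ x) (h : x ≤ y) :
    truncLog k x ≤ truncLog k y := by
  induction k with
  | zero => exact h
  | succ k ih =>
    have := truncLog_one_le k x hx
    exact max_le_max le_rfl (Real.log_le_log (by linarith) ih)

theorem truncLog_cases (k : ℕ) (x : ℝ) (hx : 1 ≤ x) :
    truncLog k x = iterLog k x ∨ truncLog k x = 1 := by
  induction k with
  | zero => left; simp [truncLog, iterLog]
  | succ k ih =>
    rcases ih with h | h
    · have : iterLog (k+1) x = Real.log (iterLog k x) := by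
        simp [iterLog, Function.iterate_succ_apply']
      rw [this, ← h, truncLog]
      rcases le_total 1 (Real.log (truncLog k x)) with h | h
      · left; exact max_eq_right h
      · right; exact max_eq_left h
    · right; simp [truncLog, h]

theorem exp_bounds : Real.exp (6/5) ≤ 10/3 ∧ (10/3 : ℝ) ≤ Real.exp (5/4) := by
  have h1 := Real.exp_one_lt_d9
  have h2 := Real.exp_one_gt_d9
  constructor
  · refine le_of_pow_le_pow_left₀ (n := 5) (by norm_num) (by norm_num) ?_
    rw [← Real.exp_nat_mul]
    have : ((5:ℕ):ℝ) * (6/5) = (6:ℕ) * 1 := by norm_num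
    rw [this, Real.exp_nat_mul]
    calc Real.exp 1 ^ 6 ≤ 2.7182818286 ^ 6 := by gcongr
      _ ≤ _ := by norm_num
  · refine le_of_pow_le_pow_left₀ (n := 4) (by norm_num) (by positivity) ?_
    rw [← Real.exp_nat_mul]
    have : ((4:ℕ):ℝ) * (5/4) = (5:ℕ) * 1 := by norm_num
    rw [this, Real.exp_nat_mul]
    calc (10/3:ℝ) ^ 4 ≤ 2.7182818283 ^ 5 := by norm_num
      _ ≤ _ := by gcongr

theorem main_est (x : ℝ) (hx : 1 ≤ x) (m p q : ℕ) (hm1 : 2 * x ≤ m) (hm2 : (m:ℝ) ≤ 3 * x)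
    (hm3 : 3 ≤ m) (hp : 10 * x ≤ p) (hq : (q:ℝ) ≤ p / m + 1) (t : ℝ)
    (ht : t * (m:ℝ) ^ q ≤ (10 * Real.exp x) ^ q * (m:ℝ) ^ p) : t ≤ (10 * x) ^ p := by
  have hm3' : (3:ℝ) ≤ m := by exact_mod_cast hm3
  have hm0 : (0:ℝ) < m := by linarith
  have hp0 : (0:ℝ) ≤ p := by positivity
  obtain ⟨e1, e2⟩ := exp_bounds
  have h1 : t ≤ (10 * Real.exp x / m) ^ q * (m:ℝ) ^ p := by
    rw [div_pow, div_mul_eq_mul_div, le_div_iff₀ (by positivity)]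
    exact ht
  have h2 : 10 * Real.exp x / m ≤ Real.exp (5/4 + x) := by
    rw [Real.exp_add, div_le_iff₀ hm0]
    have := Real.exp_pos x
    have h3 : (10:ℝ) ≤ Real.exp (5/4) * m := by nlinarith
    nlinarith
  have h4 : (q:ℝ) * (5/4 + x) ≤ p * (6/5) := by
    have a1 : (p:ℝ) / m ≤ p / 3 := by gcongr
    have a2 : (p:ℝ) / m * x ≤ p / 2 := by
      rw [div_mul_eq_mul_div, div_le_iff₀ hm0]
      nlinarith
    have a3 : (q:ℝ) * (5/4 + x) ≤ (p / m + 1) * (5/4+x) := by gcongr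
    nlinarith
  have h5 : (10 * Real.exp x / m) ^ q ≤ (10/3) ^ p := by
    calc (10 * Real.exp x / m) ^ q ≤ Real.exp (5/4 + x) ^ q := by gcongr
      _ = Real.exp (q * (5/4 + x)) := (Real.exp_nat_mul _ _).symm
      _ ≤ Real.exp (p * (6/5)) := Real.exp_le_exp.2 h4
      _ = Real.exp (6/5) ^ p := Real.exp_nat_mul _ _
      _ ≤ _ := by gcongr
  calc t ≤ _ := h1
    _ ≤ (10/3) ^ p * (3 * x) ^ p := by gcongr
    _ = _ := by rw [← mul_pow]; ring_nf

theorem trunc_tree (k : ℕ) : ∀ p : ℕ, 1 ≤ p →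
    ∃ T : PTree, T.UniformDepth (k + 1) ∧ T.numLeaves = p ∧
      (T.tran : ℝ) ≤ (10 * truncLog k p) ^ p := by
  induction k with
  | zero =>
    intro p hp
    obtain ⟨T, a, b, c⟩ := direct_tree p hp 0
    refine ⟨T, a, b, ?_⟩
    have : (T.tran : ℝ) ≤ (p:ℝ) ^ p := by
      exact_mod_cast c.trans (Nat.factorial_le_pow p)
    refine this.trans ?_
    simp only [truncLog]
    have : (0:ℝ) ≤ p := by positivity
    gcongr
    linarith
  | succ k ih =>
    intro p hp
    have hp' : (1:ℝ) ≤ p := by exact_mod_cast hp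
    set x := truncLog (k+1) p with hxdef
    have hx : 1 ≤ x := truncLog_one_le _ _ hp'
    by_cases hpx : (p:ℝ) ≤ 10 * x
    · obtain ⟨T, a, b, c⟩ := direct_tree p hp (k+1)
      refine ⟨T, a, b, ?_⟩
      have : (T.tran : ℝ) ≤ (p:ℝ) ^ p := by
        exact_mod_cast c.trans (Nat.factorial_le_pow p)
      refine this.trans ?_
      gcongr
    push Not at hpx
    have hM : truncLog k p ≤ Real.exp x := by
      have h0 := truncLog_one_le k p hp'
      rw [← Real.log_le_iff_le_exp (by linarith)]
      exact le_max_right _ _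
    obtain ⟨m, hm⟩ : ∃ m, m = ⌊3 * x⌋₊ := ⟨_, rfl⟩
    have hm2 : (m:ℝ) ≤ 3 * x := hm ▸ Nat.floor_le (by linarith)
    have hm1 : 2 * x ≤ m := by
      have := Nat.lt_floor_add_one (3 * x)
      rw [← hm] at this
      linarith
    have hm3 : 3 ≤ m := by
      rw [hm]; apply Nat.le_floor; push_cast; linarith
    have hm3' : (3:ℝ) ≤ m := by exact_mod_cast hm3
    obtain ⟨q, hq⟩ : ∃ q, q = ⌈(p:ℝ) / m⌉₊ := ⟨_, rfl⟩
    have hq1 : (q:ℝ) ≤ p / m + 1 := by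
      rw [hq]; exact (Nat.ceil_lt_add_one (by positivity)).le
    have hq2 : (p:ℝ) / m ≤ q := hq ▸ Nat.le_ceil _
    have hq3 : p ≤ m * q := by
      rw [div_le_iff₀ (by linarith)] at hq2
      have : p ≤ q * m := by exact_mod_cast hq2
      linarith
    have hq4 : q ≤ p := by
      rw [hq]; apply Nat.ceil_le.2
      apply div_le_self <;> linarith
    have hq5 : 1 ≤ q := by
      rcases Nat.eq_zero_or_pos q with h | h
      · subst h; omega
      · exact h
    obtain ⟨T, a, b, c⟩ := ih q hq5
    obtain ⟨T', a', b', c'⟩ := subst_tree m (by omega) _ T a p (by omega) (by rw [b]; exact hq3)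
    refine ⟨T', a', b', ?_⟩
    refine main_est x hx m p q hm1 hm2 hm3 hpx.le hq1 _ ?_
    rw [b] at c'
    have c2 : (T'.tran : ℝ) * (m:ℝ) ^ q ≤ T.tran * (m:ℝ) ^ p := by exact_mod_cast c'
    refine c2.trans ?_
    have hq5' : (1:ℝ) ≤ q := by exact_mod_cast hq5
    have h7 : truncLog k q ≤ Real.exp x :=
      (truncLog_mono k q p hq5' (by exact_mod_cast hq4)).trans hM
    have h8 := truncLog_one_le k q hq5'
    have : (T.tran : ℝ) ≤ (10 * Real.exp x) ^ q := c.trans (by gcongr)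
    gcongr

/-- For all `k ≥ 0` and `p ≥ 1` with `log^{(k)} p ≥ 1`, there is a
`(k,p)`-tree `T` (a rooted plane tree with exactly `p` leaves in which every root-to-leaf
path has exactly `k+1` edges) with `Tran(T) ≤ (10 · log^{(k)} p)^p`. -/
theorem exists_nice_tree (k p : ℕ) (hp : 1 ≤ p) (hlog : 1 ≤ iterLog k p) :
    ∃ T : PTree, T.UniformDepth (k + 1) ∧ T.numLeaves = p ∧
      (T.tran : ℝ) ≤ (10 * iterLog k p) ^ p := by
  obtain ⟨T, a, b, c⟩ := trunc_tree k p hp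
  have hp' : (1:ℝ) ≤ p := by exact_mod_cast hp
  refine ⟨T, a, b, c.trans ?_⟩
  have h1 := truncLog_one_le k p hp'
  have h2 : truncLog k p ≤ iterLog k p := by
    rcases truncLog_cases k p hp' with h | h <;> linarith
  gcongr
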